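/- arXiv:2001.08031 — 2 statements merged into one kernel-verified Lean document; each statement's English description precedes it below -/
import Mathlib

section
/- In any deliberation space with n agents, every sequence D₀, D₁, …, D_k of deliberative coalition structures in which each consecutive pair (D_i, D_{i+1}) is either a single-agent transition or a follow transition satisfies k ≤ n². In particular, any deliberation consisting of single-agent and follow transitions has at most n² transitions. -/
/-!
The potential `Φ(D) = ∑ |C|²` over the coalitions of `D` bounds the number of transitions.
Moving an agent from a coalition of size `a ≥ 1` to one of size `b ≥ a` raises `Φ` by
`2 (b - a) + 2 ≥ 2`, and merging nonempty coalitions of sizes `a` and `b` raises it by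
`2ab ≥ 2` (`potential_add_two_le`). As the coalition sizes of a structure add up to `n`,
`Φ ≤ n²` (`potential_le`), so in fact `2k ≤ n²`.
-/

/-!
Formalization of deliberative coalition formation (Elkind et al., "United for Change:
Deliberative Coalition Formation to Change the Status Quo").

Agents and proposals live in a metric space `M`; `V` is the finite set of agents,
`X ⊆ M` the set of proposals, `r ∈ X` the status quo.  A deliberative coalition
structure is a multiset of deliberative coalitions whose agent sets partition `V`
(empty coalitions are allowed).
-/

open scoped Classical
noncomputable section

variable {M : Type*}

/-- Agent `v` approves proposal `p` relative to status quo `r`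
if `v` is strictly closer to `p` than to `r`. -/
def Approves [MetricSpace M] (r v p : M) : Prop := dist v p < dist v r

/-- The set `C^p` of agents in `C` that approve proposal `p`. -/
def approvers [MetricSpace M] (r : M) (C : Finset M) (p : M) : Finset M :=
  C.filter fun v => Approves r v p

/-- `(C, p)` is a deliberative coalition: `C ⊆ V`, `p ∈ X`, and either `p = r` and no
agent of `C` approves any proposal in `X \ {r}`, or `p ≠ r` and every agent of `C`
approves `p`. -/
def IsCoalition [MetricSpace M] (V : Finset M) (X : Set M) (r : M)
    (C : Finset M) (p : M) : Prop :=
  C ⊆ V ∧ p ∈ X ∧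
    ((p = r ∧ ∀ v ∈ C, ∀ x ∈ X, x ≠ r → ¬ Approves r v x) ∨
     (p ≠ r ∧ ∀ v ∈ C, Approves r v p))

/-- `D` is a deliberative coalition structure: a (finite) multiset of deliberative
coalitions whose agent sets are pairwise disjoint with union `V` (equivalently, the
multiset sum of the agent sets is exactly `V`). Empty coalitions are allowed. -/
def IsStructure [MetricSpace M] (V : Finset M) (X : Set M) (r : M)
    (D : Multiset (Finset M × M)) : Prop :=
  (∀ c ∈ D, IsCoalition V X r c.1 c.2) ∧
    (D.map fun c => c.1.val).sum = V.val

/-- Single-agent transition: an agent `v` in a coalition `(C₁, p₁)` with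
`|C₂| ≥ |C₁| ≥ 1` moves to the coalition `(C₂, p₂)`; both the old and the new
collection of coalitions must be deliberative coalition structures. -/
def SingleAgentTransition [MetricSpace M] (V : Finset M) (X : Set M) (r : M)
    (D D' : Multiset (Finset M × M)) : Prop :=
  IsStructure V X r D ∧ IsStructure V X r D' ∧
  ∃ (C₁ C₂ : Finset M) (p₁ p₂ v : M) (D₀ : Multiset (Finset M × M)),
    v ∈ C₁ ∧ 1 ≤ C₁.card ∧ C₁.card ≤ C₂.card ∧
    D = (C₁, p₁) ::ₘ (C₂, p₂) ::ₘ D₀ ∧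
    D' = (C₁.erase v, p₁) ::ₘ (insert v C₂, p₂) ::ₘ D₀

/-- Follow transition: a nonempty coalition `(C₁, p₁)` joins a nonempty coalition
`(C₂, p₂)` in supporting `p₂`. -/
def FollowTransition [MetricSpace M] (V : Finset M) (X : Set M) (r : M)
    (D D' : Multiset (Finset M × M)) : Prop :=
  IsStructure V X r D ∧ IsStructure V X r D' ∧
  ∃ (C₁ C₂ : Finset M) (p₁ p₂ : M) (D₀ : Multiset (Finset M × M)),
    C₁.Nonempty ∧ C₂.Nonempty ∧
    D = (C₁, p₁) ::ₘ (C₂, p₂) ::ₘ D₀ ∧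
    D' = (C₁ ∪ C₂, p₂) ::ₘ D₀

/-- The sum of the squared sizes of the coalitions in `D`. -/
def potential (D : Multiset (Finset M × M)) : ℕ :=
  (D.map fun c => c.1.card ^ 2).sum

lemma potential_cons (c : Finset M × M) (D : Multiset (Finset M × M)) :
    potential (c ::ₘ D) = c.1.card ^ 2 + potential D := by
  simp [potential]

lemma potential_le_sq_card_sum (D : Multiset (Finset M × M)) :
    potential D ≤ (Multiset.card (D.map fun c => c.1.val).sum) ^ 2 := by
  induction D using Multiset.induction_on with
  | empty => simp [potential]
  | cons c D ih =>
    rw [potential_cons, Multiset.map_cons, Multiset.sum_cons, Multiset.card_add, Finset.card_val]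
    nlinarith [Nat.zero_le (c.1.card * Multiset.card (D.map fun c => c.1.val).sum)]

lemma potential_le [MetricSpace M] {V : Finset M} {X : Set M} {r : M}
    {D : Multiset (Finset M × M)} (h : IsStructure V X r D) : potential D ≤ V.card ^ 2 := by
  have := potential_le_sq_card_sum D
  rwa [h.2, Finset.card_val] at this

lemma IsStructure.disjoint [MetricSpace M] {V : Finset M} {X : Set M} {r : M}
    {c₁ c₂ : Finset M × M} {D : Multiset (Finset M × M)}
    (h : IsStructure V X r (c₁ ::ₘ c₂ ::ₘ D)) : Disjoint c₁.1 c₂.1 := by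
  have hn := V.nodup
  rw [← h.2, Multiset.map_cons, Multiset.map_cons, Multiset.sum_cons, Multiset.sum_cons,
    ← add_assoc] at hn
  exact Finset.disjoint_val.1 (Multiset.nodup_add.1 (Multiset.nodup_add.1 hn).1).2.2

lemma potential_add_two_le [MetricSpace M] {V : Finset M} {X : Set M} {r : M}
    {D D' : Multiset (Finset M × M)}
    (h : SingleAgentTransition V X r D D' ∨ FollowTransition V X r D D') :
    potential D + 2 ≤ potential D' := by
  rcases h with ⟨hD, -, C₁, C₂, p₁, p₂, v, D₀, hv, h1, h12, rfl, rfl⟩ |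
    ⟨hD, -, C₁, C₂, p₁, p₂, D₀, h1, h2, rfl, rfl⟩
  · have hv2 : v ∉ C₂ := Finset.disjoint_left.1 hD.disjoint hv
    simp only [potential_cons, Finset.card_insert_of_notMem hv2, Finset.card_erase_of_mem hv]
    obtain ⟨a, ha⟩ := Nat.exists_eq_add_of_le' h1
    rw [ha] at h12 ⊢
    rw [Nat.add_sub_cancel]
    nlinarith
  · have hd : Disjoint C₁ C₂ := hD.disjoint
    simp only [potential_cons, Finset.card_union_of_disjoint hd]
    nlinarith [Nat.mul_pos h1.card_pos h2.card_pos]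

/-- In any deliberation space with `n` agents, every sequence of
deliberative coalition structures in which each consecutive pair is a single-agent
transition or a follow transition has length at most `n²`. -/
theorem singleAgent_follow_deliberation_length_le_sq [MetricSpace M]
    (V : Finset M) (X : Set M) (r : M) (hr : r ∈ X)
    (k : ℕ) (Ds : ℕ → Multiset (Finset M × M))
    (hchain : ∀ i < k,
      SingleAgentTransition V X r (Ds i) (Ds (i + 1)) ∨
      FollowTransition V X r (Ds i) (Ds (i + 1))) :
    k ≤ V.card ^ 2 := by
  have key : ∀ i ≤ k, 2 * i ≤ potential (Ds i) := by
    intro i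
    induction i with
    | zero => simp
    | succ i ih =>
      intro hi
      have h1 := ih (by omega)
      have h2 := potential_add_two_le (hchain i hi)
      omega
  rcases Nat.eq_zero_or_pos k with rfl | hk
  · exact Nat.zero_le _
  -- The last structure is the target of the final transition, hence a valid structure.
  · have hlast : IsStructure V X r (Ds (k - 1 + 1)) := by
      rcases hchain (k - 1) (by omega) with h | h
      · exact h.2.1
      · exact h.2.1
    rw [Nat.sub_add_cancel hk] at hlast
    have h1 := key k le_rfl
    have h2 := potential_le hlast
    omega
end
end

section
/- In every Euclidean deliberation space (M = X = ℝ^d with the Euclidean metric, d ≥ 1, V ⊆ ℝ^d finite, |V| = n) in which at least one agent approves at least one proposal, for every deliberative coalition structure D₀ there exists a sequence D₀, D₁, …, D_k of deliberative coalition structures with k ≤ n² + 1 such that each consecutive pair (D_i, D_{i+1}) is a compromise transition and D_k is successful. -/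
/-!
An agent `v` approves `p` exactly when `‖p - r‖² < 2⟪v - r, p - r⟫`. Hence the approvers of a
proposal lie in an open half-space bounded by a hyperplane through `r`, and conversely any finite
set of agents in such a half-space approves a common proposal, obtained by moving from `r` a short
way along the normal direction (`exists_approved_of_inner_pos`).

Start from a largest coalition `(C, p)` with `p ≠ r`.

*Growing.* If some agent `v ≠ r` outside `C` satisfies `0 ≤ ⟪v - r, p - r⟫`, tilting `p` slightly
towards `v` yields a proposal approved by `v` and all of `C` (`exists_approved_insert`). As `C` is
largest, compromising with the coalition of `v` is a legal transition, and it strictly enlarges the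
largest coalition (`canSucceed_of_largest`).

*Merging.* Otherwise all agents `v ≠ r` outside `C` lie in the opposite open half-space, so they
all approve one proposal and any two of their nonempty coalitions can be merged entirely. When at
most one nonempty coalition besides `C` is left, a single compromise on a proposal of maximum
support succeeds, unless the structure is successful already (`canSucceed_of_opposite`).

Each growing step adds at least one agent to `C`. From the end of that phase on, the number of
transitions is at most the number of nonempty coalitions other than `C`, hence at most the number
of agents outside `C`. So at most `n - |C| ≤ n² + 1` transitions are made in total, with `C` the
initial coalition.
-/


/-!
Formalization of deliberative coalition formation (Elkind et al., "United for Change: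
Deliberative Coalition Formation to Change the Status Quo").

Agents and proposals live in a metric space `M`; `V` is the finite set of agents,
`X ⊆ M` the set of proposals, `r ∈ X` the status quo.  A deliberative coalition
structure is a multiset of deliberative coalitions whose agent sets partition `V`
(empty coalitions are allowed).
-/

open scoped Classical
noncomputable section

variable {M : Type*}

/-- Compromise transition: the approvers of a proposal `p ∈ X` within two coalitions
`(C₁, p₁)` and `(C₂, p₂)` form a new coalition `(C₁^p ∪ C₂^p, p)` whose size exceeds
both `|C₁|` and `|C₂|`, leaving the dissenters `(C₁ \ C₁^p, p₁)` and `(C₂ \ C₂^p, p₂)`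
behind. -/
def CompromiseTransition [MetricSpace M] (V : Finset M) (X : Set M) (r : M)
    (D D' : Multiset (Finset M × M)) : Prop :=
  IsStructure V X r D ∧ IsStructure V X r D' ∧
  ∃ (C₁ C₂ : Finset M) (p₁ p₂ p : M) (D₀ : Multiset (Finset M × M)),
    p ∈ X ∧
    C₁.card < (approvers r C₁ p ∪ approvers r C₂ p).card ∧
    C₂.card < (approvers r C₁ p ∪ approvers r C₂ p).card ∧
    D = (C₁, p₁) ::ₘ (C₂, p₂) ::ₘ D₀ ∧
    D' = (approvers r C₁ p ∪ approvers r C₂ p, p) ::ₘ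
         (C₁ \ approvers r C₁ p, p₁) ::ₘ (C₂ \ approvers r C₂ p, p₂) ::ₘ D₀

/-- The maximum support `m*`: the largest number of agents approving a single proposal
in `X \ {r}`. -/
def maxSupport [MetricSpace M] (V : Finset M) (X : Set M) (r : M) : ℕ :=
  sSup ((fun p => (approvers r V p).card) '' (X \ {r}))

/-- A coalition structure is successful if it contains a deliberative coalition
`(C, p)` with `p ≠ r` and `|C| = m*`. -/
def Successful [MetricSpace M] (V : Finset M) (X : Set M) (r : M)
    (D : Multiset (Finset M × M)) : Prop :=
  ∃ c ∈ D, c.2 ≠ r ∧ c.1.card = maxSupport V X r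

set_option linter.unusedSectionVars false

/-! ### Approval in inner product spaces -/

section Geometry

variable {E : Type*} [NormedAddCommGroup E] [InnerProductSpace ℝ E]

lemma approves_iff_inner (r v p : E) :
    Approves r v p ↔ ‖p - r‖ ^ 2 < 2 * inner ℝ (v - r) (p - r) := by
  unfold Approves
  rw [dist_eq_norm, dist_eq_norm, ← sq_lt_sq₀ (norm_nonneg _) (norm_nonneg _)]
  have h : v - p = (v - r) - (p - r) := by abel
  rw [h, norm_sub_sq_real]
  constructor <;> intro h <;> linarith

lemma ne_of_approves {r v p : E} (h : Approves r v p) : p ≠ r := by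
  rintro rfl
  exact lt_irrefl _ h

lemma agent_ne_of_approves {r v p : E} (h : Approves r v p) : v ≠ r := by
  rintro rfl
  unfold Approves at h
  rw [dist_self] at h
  exact absurd h (not_lt.mpr dist_nonneg)

lemma inner_pos_of_approves {r v p : E} (h : Approves r v p) :
    0 < inner ℝ (v - r) (p - r) := by
  rw [approves_iff_inner] at h
  nlinarith [sq_nonneg ‖p - r‖]

lemma approves_self {r v : E} (h : v ≠ r) : Approves r v v := by
  unfold Approves
  rw [dist_self]
  exact dist_pos.mpr h

/-- Finitely many agents in an open half-space through `r` approve a common proposal: a short step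
from `r` along the normal `u`. -/
lemma exists_approved_of_inner_pos (r u : E) (C : Finset E)
    (h : ∀ v ∈ C, 0 < inner ℝ (v - r) u) : ∃ p, ∀ v ∈ C, Approves r v p := by
  have hev : ∀ᶠ ε : ℝ in nhdsWithin 0 (Set.Ioi 0),
      ∀ v ∈ C, ε * ‖u‖ ^ 2 < 2 * inner ℝ (v - r) u := by
    rw [Filter.eventually_all_finset]
    intro v hv
    have hc : Continuous fun ε : ℝ => ε * ‖u‖ ^ 2 := by fun_prop
    refine nhdsWithin_le_nhds (hc.continuousAt.eventually_lt continuousAt_const ?_)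
    simpa using h v hv
  obtain ⟨ε, hε, hpos⟩ := (hev.and self_mem_nhdsWithin).exists
  have hpos' : 0 < ε := hpos
  refine ⟨r + ε • u, fun v hv => ?_⟩
  rw [approves_iff_inner, add_sub_cancel_left, norm_smul, inner_smul_right, mul_pow,
    Real.norm_eq_abs, sq_abs]
  have := mul_lt_mul_of_pos_left (hε v hv) hpos'
  linarith

/-- If `v ≠ r` lies weakly on the positive side of `p`, tilting `p` towards `v` wins the approval
of `v` without losing that of finitely many agents approving `p`. -/
lemma exists_approved_insert (r v p : E) (C : Finset E) (hC : ∀ c ∈ C, Approves r c p)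
    (hv : v ≠ r) (hvp : 0 ≤ inner ℝ (v - r) (p - r)) :
    ∃ q, Approves r v q ∧ ∀ c ∈ C, Approves r c q := by
  have hev : ∀ᶠ δ : ℝ in nhdsWithin 0 (Set.Ioi 0),
      ∀ c ∈ C, 0 < inner ℝ (c - r) (p - r) + δ * inner ℝ (c - r) (v - r) := by
    rw [Filter.eventually_all_finset]
    intro c hc
    have hcont : Continuous fun δ : ℝ =>
      inner ℝ (c - r) (p - r) + δ * inner ℝ (c - r) (v - r) := by fun_prop
    refine nhdsWithin_le_nhds (continuousAt_const.eventually_lt hcont.continuousAt ?_)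
    simpa using inner_pos_of_approves (hC c hc)
  obtain ⟨δ, hδ, hpos⟩ := (hev.and self_mem_nhdsWithin).exists
  have hpos' : 0 < δ := hpos
  obtain ⟨q, hq⟩ := exists_approved_of_inner_pos r ((p - r) + δ • (v - r)) (insert v C) (by
    intro c hc
    rw [inner_add_right, inner_smul_right]
    rcases Finset.mem_insert.mp hc with rfl | hc
    · have hn : 0 < inner ℝ (c - r) (c - r) := by
        rw [real_inner_self_eq_norm_sq]
        have := norm_pos_iff.mpr (sub_ne_zero.mpr hv)
        positivity
      have := mul_pos hpos' hn
      linarith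
    · exact hδ c hc)
  exact ⟨q, hq v (Finset.mem_insert_self _ _),
    fun c hc => hq c (Finset.mem_insert_of_mem hc)⟩

end Geometry

/-! ### Coalition structures and compromise transitions -/

section Structures

variable {E : Type*} [NormedAddCommGroup E] [InnerProductSpace ℝ E]
  {V : Finset E} {r : E}

lemma mem_agents_iff {D : Multiset (Finset E × E)} {v : E} :
    v ∈ (D.map fun c => c.1.val).sum ↔ ∃ c ∈ D, v ∈ c.1 := by
  induction D using Multiset.induction with
  | empty => simp
  | cons c D ih => simp [ih]

lemma card_agents (D : Multiset (Finset E × E)) :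
    Multiset.card (D.map fun c => c.1.val).sum = (D.map fun c => c.1.card).sum := by
  induction D using Multiset.induction with
  | empty => simp
  | cons c D ih => simp [ih]

lemma IsStructure.exists_mem {D : Multiset (Finset E × E)} (h : IsStructure V Set.univ r D)
    {v : E} (hv : v ∈ V) : ∃ c ∈ D, v ∈ c.1 := by
  rw [← mem_agents_iff, h.2]
  exact hv

/-- An agent away from the status quo approves its own position, so its coalition cannot be one
that supports the status quo. -/
lemma IsCoalition.ne_of_mem {C : Finset E} {p v : E} (h : IsCoalition V Set.univ r C p)
    (hv : v ∈ C) (hvr : v ≠ r) : p ≠ r := by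
  rcases h.2.2 with ⟨_, h⟩ | h
  · exact absurd (approves_self hvr) (h v hv v (Set.mem_univ _) hvr)
  · exact h.1

lemma IsCoalition.approves {C : Finset E} {p : E} (h : IsCoalition V Set.univ r C p)
    (hp : p ≠ r) : ∀ v ∈ C, Approves r v p := by
  rcases h.2.2 with h | h
  · exact absurd h.1 hp
  · exact h.2

lemma IsCoalition.subset {C C' : Finset E} {p : E} (h : IsCoalition V Set.univ r C p)
    (hs : C' ⊆ C) : IsCoalition V Set.univ r C' p := by
  refine ⟨hs.trans h.1, h.2.1, ?_⟩
  rcases h.2.2 with h | h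
  · exact Or.inl ⟨h.1, fun v hv => h.2 v (hs hv)⟩
  · exact Or.inr ⟨h.1, fun v hv => h.2 v (hs hv)⟩

lemma IsStructure.disjoint_s15 {C₁ C₂ : Finset E} {p₁ p₂ : E} {F : Multiset (Finset E × E)}
    (h : IsStructure V Set.univ r ((C₁, p₁) ::ₘ (C₂, p₂) ::ₘ F)) : Disjoint C₁ C₂ := by
  have h2 := h.2
  have hn := V.nodup
  rw [← h2] at hn
  simp only [Multiset.map_cons, Multiset.sum_cons] at hn
  rw [Finset.disjoint_left]
  intro a h1 h2
  exact Multiset.disjoint_left.mp (Multiset.nodup_add.mp hn).2.2 h1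
    (Multiset.mem_add.mpr (Or.inl h2))

/-- For `p ≠ r` the size conditions alone make a compromise on `p` a transition: its result is
automatically a coalition structure. -/
lemma compromiseTransition_of_card_lt {C₁ C₂ : Finset E} {p₁ p₂ p : E}
    {F : Multiset (Finset E × E)}
    (h : IsStructure V Set.univ r ((C₁, p₁) ::ₘ (C₂, p₂) ::ₘ F)) (hp : p ≠ r)
    (h₁ : C₁.card < (approvers r C₁ p ∪ approvers r C₂ p).card)
    (h₂ : C₂.card < (approvers r C₁ p ∪ approvers r C₂ p).card) :
    CompromiseTransition V Set.univ r ((C₁, p₁) ::ₘ (C₂, p₂) ::ₘ F)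
      ((approvers r C₁ p ∪ approvers r C₂ p, p) ::ₘ
         (C₁ \ approvers r C₁ p, p₁) ::ₘ (C₂ \ approvers r C₂ p, p₂) ::ₘ F) := by
  have hdisj := h.disjoint_s15
  have hs₁ : approvers r C₁ p ⊆ C₁ := Finset.filter_subset _ _
  have hs₂ : approvers r C₂ p ⊆ C₂ := Finset.filter_subset _ _
  have hc₁ : IsCoalition V Set.univ r C₁ p₁ := h.1 (C₁, p₁) (by simp)
  have hc₂ : IsCoalition V Set.univ r C₂ p₂ := h.1 (C₂, p₂) (by simp)
  refine ⟨h, ⟨?_, ?_⟩, C₁, C₂, p₁, p₂, p, F, Set.mem_univ _, h₁, h₂, rfl, rfl⟩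
  · intro c hc
    simp only [Multiset.mem_cons] at hc
    rcases hc with rfl | rfl | rfl | hc
    · refine ⟨Finset.union_subset (hs₁.trans hc₁.1) (hs₂.trans hc₂.1), Set.mem_univ _,
        Or.inr ⟨hp, fun v hv => ?_⟩⟩
      rcases Finset.mem_union.mp hv with hv | hv
      · exact (Finset.mem_filter.mp hv).2
      · exact (Finset.mem_filter.mp hv).2
    · exact hc₁.subset Finset.sdiff_subset
    · exact hc₂.subset Finset.sdiff_subset
    · exact h.1 c (by simp [hc])
  · rw [← h.2]
    have e₁ : (approvers r C₁ p).val + (C₁ \ approvers r C₁ p).val = C₁.val := by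
      rw [Finset.sdiff_val]
      exact add_tsub_cancel_of_le (Finset.val_le_iff.mpr hs₁)
    have e₂ : (approvers r C₂ p).val + (C₂ \ approvers r C₂ p).val = C₂.val := by
      rw [Finset.sdiff_val]
      exact add_tsub_cancel_of_le (Finset.val_le_iff.mpr hs₂)
    have e₃ : (approvers r C₁ p ∪ approvers r C₂ p).val
        = (approvers r C₁ p).val + (approvers r C₂ p).val := by
      rw [← Finset.disjUnion_eq_union _ _ (hdisj.mono hs₁ hs₂)]
      rfl
    simp only [Multiset.map_cons, Multiset.sum_cons]
    rw [e₃, ← e₁, ← e₂]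
    abel

lemma card_approvers_le_maxSupport {p : E} (hp : p ≠ r) :
    (approvers r V p).card ≤ maxSupport V Set.univ r := by
  refine le_csSup ⟨V.card, ?_⟩ ⟨p, ⟨Set.mem_univ _, hp⟩, rfl⟩
  rintro _ ⟨q, _, rfl⟩
  exact Finset.card_le_card (Finset.filter_subset _ _)

lemma exists_maxSupport (h : ∃ p : E, p ≠ r) :
    ∃ p : E, p ≠ r ∧ (approvers r V p).card = maxSupport V Set.univ r := by
  obtain ⟨p, hp⟩ := h
  have hmem : maxSupport V Set.univ r ∈
      (fun p => (approvers r V p).card) '' (Set.univ \ {r}) := by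
    refine Nat.sSup_mem ⟨_, p, ⟨Set.mem_univ _, hp⟩, rfl⟩ ⟨V.card, ?_⟩
    rintro _ ⟨q, _, rfl⟩
    exact Finset.card_le_card (Finset.filter_subset _ _)
  obtain ⟨q, hq, he⟩ := hmem
  exact ⟨q, hq.2, he⟩

lemma IsCoalition.card_le_maxSupport {C : Finset E} {p : E}
    (h : IsCoalition V Set.univ r C p) (hp : p ≠ r) : C.card ≤ maxSupport V Set.univ r :=
  (Finset.card_le_card fun v hv =>
    Finset.mem_filter.mpr ⟨h.1 hv, h.approves hp v hv⟩).trans (card_approvers_le_maxSupport hp)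

end Structures

/-! ### Runs of compromise transitions -/

section Runs

variable {E : Type*} [NormedAddCommGroup E] [InnerProductSpace ℝ E]

/-- From `D` a successful structure is reachable by at most `k` compromise transitions. -/
def CanSucceed (V : Finset E) (r : E) (k : ℕ) (D : Multiset (Finset E × E)) : Prop :=
  ∃ (j : ℕ) (Ds : ℕ → Multiset (Finset E × E)), j ≤ k ∧ Ds 0 = D ∧
    (∀ i < j, CompromiseTransition V Set.univ r (Ds i) (Ds (i + 1))) ∧
    Successful V Set.univ r (Ds j)

variable {V : Finset E} {r : E}

lemma CanSucceed.of_successful {D : Multiset (Finset E × E)} (k : ℕ)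
    (h : Successful V Set.univ r D) : CanSucceed V r k D :=
  ⟨0, fun _ => D, Nat.zero_le _, rfl, fun i hi => absurd hi (Nat.not_lt_zero i), h⟩

lemma CanSucceed.mono {D : Multiset (Finset E × E)} {k l : ℕ} (h : CanSucceed V r k D)
    (hkl : k ≤ l) : CanSucceed V r l D := by
  obtain ⟨j, Ds, hj, h⟩ := h
  exact ⟨j, Ds, hj.trans hkl, h⟩

lemma CanSucceed.step {D D' : Multiset (Finset E × E)} {k : ℕ}
    (ht : CompromiseTransition V Set.univ r D D') (h : CanSucceed V r k D') :
    CanSucceed V r (k + 1) D := by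
  obtain ⟨j, Ds, hj, h0, hs, hf⟩ := h
  refine ⟨j + 1, fun i => Nat.casesOn i D Ds, by omega, rfl, ?_, hf⟩
  intro i hi
  cases i with
  | zero =>
    change CompromiseTransition V Set.univ r D (Ds 0)
    rw [h0]
    exact ht
  | succ i => exact hs i (by omega)

/-- The nonempty coalitions of `F` that do not support the status quo. -/
def activePart (r : E) (F : Multiset (Finset E × E)) : Multiset (Finset E × E) :=
  F.filter fun c => c.2 ≠ r ∧ c.1.Nonempty

lemma card_activePart_le (F : Multiset (Finset E × E)) :
    Multiset.card (activePart r F) ≤ (F.map fun c => c.1.card).sum := by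
  unfold activePart
  induction F using Multiset.induction with
  | empty => simp
  | cons c F ih =>
    rw [Multiset.map_cons, Multiset.sum_cons, Multiset.filter_cons, Multiset.card_add]
    refine add_le_add ?_ ih
    split_ifs with h
    · simpa using h.2.card_pos
    · simp

lemma approvers_eq_self {C : Finset E} {p : E} (h : ∀ v ∈ C, Approves r v p) :
    approvers r C p = C := Finset.filter_true_of_mem h

/-- If a structure contains `(C, p)` with `p ≠ r` and every agent other than `r` belongs to `C`, it is
successful. -/
lemma successful_of_forall_mem {C : Finset E} {p : E} {F : Multiset (Finset E × E)}
    (h : IsStructure V Set.univ r ((C, p) ::ₘ F)) (hp : p ≠ r)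
    (hall : ∀ v ∈ V, v ≠ r → v ∈ C) : Successful V Set.univ r ((C, p) ::ₘ F) := by
  have hc : IsCoalition V Set.univ r C p := h.1 (C, p) (by simp)
  refine ⟨(C, p), by simp, hp, le_antisymm (hc.card_le_maxSupport hp) ?_⟩
  obtain ⟨q, hq, he⟩ := exists_maxSupport (V := V) ⟨p, hp⟩
  rw [← he]
  refine Finset.card_le_card fun v hv => ?_
  obtain ⟨hv, hvq⟩ := Finset.mem_filter.mp hv
  exact hall v hv (agent_ne_of_approves hvq)

/-- If all agents other than `r` lie in two coalitions not supporting `r`, at most one compromise on a proposal of maximum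
support is needed. -/
lemma canSucceed_of_two {C₁ C₂ : Finset E} {p₁ p₂ : E} {F : Multiset (Finset E × E)}
    (h : IsStructure V Set.univ r ((C₁, p₁) ::ₘ (C₂, p₂) ::ₘ F)) (hp₁ : p₁ ≠ r) (hp₂ : p₂ ≠ r)
    (hall : ∀ v ∈ V, v ≠ r → v ∈ C₁ ∨ v ∈ C₂) :
    CanSucceed V r 1 ((C₁, p₁) ::ₘ (C₂, p₂) ::ₘ F) := by
  have hc₁ : IsCoalition V Set.univ r C₁ p₁ := h.1 (C₁, p₁) (by simp)
  have hc₂ : IsCoalition V Set.univ r C₂ p₂ := h.1 (C₂, p₂) (by simp)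
  by_cases e₁ : C₁.card = maxSupport V Set.univ r
  · exact .of_successful _ ⟨(C₁, p₁), by simp, hp₁, e₁⟩
  by_cases e₂ : C₂.card = maxSupport V Set.univ r
  · exact .of_successful _ ⟨(C₂, p₂), by simp, hp₂, e₂⟩
  obtain ⟨q, hq, he⟩ := exists_maxSupport (V := V) ⟨p₁, hp₁⟩
  have hu : approvers r C₁ q ∪ approvers r C₂ q = approvers r V q := by
    ext v
    simp only [approvers, Finset.mem_union, Finset.mem_filter]
    constructor
    · rintro (⟨hv, hvq⟩ | ⟨hv, hvq⟩)
      · exact ⟨hc₁.1 hv, hvq⟩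
      · exact ⟨hc₂.1 hv, hvq⟩
    · rintro ⟨hv, hvq⟩
      rcases hall v hv (agent_ne_of_approves hvq) with h | h
      · exact Or.inl ⟨h, hvq⟩
      · exact Or.inr ⟨h, hvq⟩
  have ht := compromiseTransition_of_card_lt h hq
    (by rw [hu, he]; exact lt_of_le_of_ne (hc₁.card_le_maxSupport hp₁) e₁)
    (by rw [hu, he]; exact lt_of_le_of_ne (hc₂.card_le_maxSupport hp₂) e₂)
  refine CanSucceed.step ht (.of_successful 0 ⟨_, Multiset.mem_cons_self _ _, hq, ?_⟩)
  rw [← he, ← hu]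

lemma card_activePart_cons_of_active {c : Finset E × E} (F : Multiset (Finset E × E))
    (hc : c.2 ≠ r ∧ c.1.Nonempty) :
    Multiset.card (activePart r (c ::ₘ F)) = Multiset.card (activePart r F) + 1 := by
  unfold activePart
  rw [Multiset.filter_cons_of_pos (p := fun c => c.2 ≠ r ∧ c.1.Nonempty) F hc,
    Multiset.card_cons]

lemma activePart_cons_empty (p : E) (F : Multiset (Finset E × E)) :
    activePart r ((∅, p) ::ₘ F) = activePart r F := by
  unfold activePart
  rw [Multiset.filter_cons_of_neg]
  simp

/-- Each agent other than `r` and outside `C` sits in an active coalition besides `C`. -/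
lemma IsStructure.exists_mem_activePart {C : Finset E} {p v : E} {F : Multiset (Finset E × E)}
    (h : IsStructure V Set.univ r ((C, p) ::ₘ F)) (hv : v ∈ V) (hvr : v ≠ r) (hvC : v ∉ C) :
    ∃ c ∈ activePart r F, v ∈ c.1 := by
  obtain ⟨c, hc, hvc⟩ := h.exists_mem hv
  rcases Multiset.mem_cons.mp hc with rfl | hcF
  · exact absurd hvc hvC
  · exact ⟨c, Multiset.mem_filter.mpr ⟨hcF, (h.1 c hc).ne_of_mem hvc hvr, v, hvc⟩, hvc⟩

/-- When all agents outside `C` other than `r` lie strictly on the negative side of `p`, merging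
the other coalitions until at most one is left, and then compromising on a proposal of maximum
support, takes at most as many transitions as there are active coalitions besides `C`. -/
lemma canSucceed_of_opposite {C : Finset E} {p : E} (hp : p ≠ r)
    (hneg : ∀ v ∈ V, v ≠ r → v ∉ C → inner ℝ (v - r) (p - r) < 0) (t : ℕ) :
    ∀ F : Multiset (Finset E × E), IsStructure V Set.univ r ((C, p) ::ₘ F) →
      Multiset.card (activePart r F) = t → CanSucceed V r t ((C, p) ::ₘ F) := by
  -- All agents in the opposite half-space approve this single proposal `q`.
  obtain ⟨q, hq⟩ := exists_approved_of_inner_pos r (-(p - r))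
    (V.filter fun v => v ≠ r ∧ v ∉ C) (by
      intro v hv
      obtain ⟨hv, hvr, hvC⟩ := Finset.mem_filter.mp hv
      rw [inner_neg_right]
      linarith [hneg v hv hvr hvC])
  induction t with
  | zero =>
    intro F h ht
    refine .of_successful _ (successful_of_forall_mem h hp fun v hv hvr => ?_)
    by_contra hvC
    obtain ⟨c, hc, -⟩ := h.exists_mem_activePart hv hvr hvC
    rw [Multiset.card_eq_zero.mp ht] at hc
    simp at hc
  | succ t ih =>
    intro F h ht
    obtain ⟨c₂, hc₂⟩ := Multiset.card_pos_iff_exists_mem.mp (by omega : 0 <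
      Multiset.card (activePart r F))
    obtain ⟨hc₂F, hact₂⟩ := Multiset.mem_filter.mp hc₂
    obtain ⟨F, rfl⟩ := Multiset.exists_cons_of_mem hc₂F
    rw [card_activePart_cons_of_active F hact₂] at ht
    cases t with
    | zero =>
      have hF : activePart r F = 0 := Multiset.card_eq_zero.mp (by omega)
      refine canSucceed_of_two h hp hact₂.1 fun v hv hvr => ?_
      by_contra! hcon
      obtain ⟨c, hc, hvc⟩ := h.exists_mem_activePart hv hvr hcon.1
      obtain ⟨hcF, hact⟩ := Multiset.mem_filter.mp hc
      rcases Multiset.mem_cons.mp hcF with rfl | hcF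
      · exact hcon.2 hvc
      · have : c ∈ activePart r F := Multiset.mem_filter.mpr ⟨hcF, hact⟩
        rw [hF] at this
        simp at this
    | succ t =>
      obtain ⟨c₃, hc₃⟩ := Multiset.card_pos_iff_exists_mem.mp (by omega : 0 <
        Multiset.card (activePart r F))
      obtain ⟨hc₃F, hact₃⟩ := Multiset.mem_filter.mp hc₃
      obtain ⟨F, rfl⟩ := Multiset.exists_cons_of_mem hc₃F
      rw [card_activePart_cons_of_active F hact₃] at ht
      obtain ⟨C₂, p₂⟩ := c₂
      obtain ⟨C₃, p₃⟩ := c₃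
      have e : (C, p) ::ₘ (C₂, p₂) ::ₘ (C₃, p₃) ::ₘ F
          = (C₂, p₂) ::ₘ (C₃, p₃) ::ₘ (C, p) ::ₘ F := by
        rw [Multiset.cons_swap, Multiset.cons_swap (C, p)]
      have e' : (C, p) ::ₘ (C₂, p₂) ::ₘ (C₃, p₃) ::ₘ F
          = (C, p) ::ₘ (C₃, p₃) ::ₘ (C₂, p₂) ::ₘ F := by
        rw [Multiset.cons_swap (C₂, p₂)]
      have hk₂ : IsCoalition V Set.univ r C₂ p₂ := h.1 (C₂, p₂) (by simp)
      have hk₃ : IsCoalition V Set.univ r C₃ p₃ := h.1 (C₃, p₃) (by simp)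
      have hd₂ : Disjoint C C₂ := h.disjoint_s15
      have hd₃ : Disjoint C C₃ := (e' ▸ h).disjoint_s15
      have hd : Disjoint C₂ C₃ := (e ▸ h).disjoint_s15
      have ha₂ : ∀ v ∈ C₂, Approves r v q := fun v hv =>
        hq v (Finset.mem_filter.mpr ⟨hk₂.1 hv,
          agent_ne_of_approves (hk₂.approves hact₂.1 v hv), Finset.disjoint_right.mp hd₂ hv⟩)
      have ha₃ : ∀ v ∈ C₃, Approves r v q := fun v hv =>
        hq v (Finset.mem_filter.mpr ⟨hk₃.1 hv,
          agent_ne_of_approves (hk₃.approves hact₃.1 v hv), Finset.disjoint_right.mp hd₃ hv⟩)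
      have hcard : (C₂ ∪ C₃).card = C₂.card + C₃.card := Finset.card_union_of_disjoint hd
      have hn₂ : 0 < C₂.card := hact₂.2.card_pos
      have hn₃ : 0 < C₃.card := hact₃.2.card_pos
      have hqr : q ≠ r := by
        obtain ⟨v, hv⟩ := hact₂.2
        exact ne_of_approves (ha₂ v hv)
      have htr := compromiseTransition_of_card_lt (p := q) (e ▸ h) hqr
        (by rw [approvers_eq_self ha₂, approvers_eq_self ha₃]; omega)
        (by rw [approvers_eq_self ha₂, approvers_eq_self ha₃]; omega)
      rw [approvers_eq_self ha₂, approvers_eq_self ha₃, sdiff_self, sdiff_self] at htr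
      have e'' : (C₂ ∪ C₃, q) ::ₘ (⊥, p₂) ::ₘ (⊥, p₃) ::ₘ (C, p) ::ₘ F
          = (C, p) ::ₘ (C₂ ∪ C₃, q) ::ₘ (∅, p₂) ::ₘ (∅, p₃) ::ₘ F := by
        rw [Multiset.cons_swap _ (C, p), Multiset.cons_swap _ (C, p),
          Multiset.cons_swap _ (C, p)]
        rfl
      rw [e''] at htr
      rw [e]
      refine CanSucceed.step htr (ih _ htr.2.1 ?_)
      rw [card_activePart_cons_of_active, activePart_cons_empty, activePart_cons_empty]
      · omega
      · exact ⟨hqr, hact₂.2.mono Finset.subset_union_left⟩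

/-- If `C` is largest among the coalitions not supporting the status quo, success is reachable in
at most as many transitions as there are agents outside `C`. The induction variable `m` bounds that
number of agents. -/
lemma canSucceed_of_largest (m : ℕ) :
    ∀ (C : Finset E) (p : E) (F : Multiset (Finset E × E)),
      IsStructure V Set.univ r ((C, p) ::ₘ F) → p ≠ r →
      (∀ c ∈ F, c.2 ≠ r → c.1.card ≤ C.card) → V.card - C.card ≤ m →
      CanSucceed V r m ((C, p) ::ₘ F) := by
  induction m with
  | zero =>
    intro C p F h hp _ hm
    have hc : IsCoalition V Set.univ r C p := h.1 (C, p) (by simp)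
    have hCV : C = V := Finset.eq_of_subset_of_card_le hc.1 (by omega)
    exact .of_successful _ (successful_of_forall_mem h hp fun v hv _ => hCV ▸ hv)
  | succ m ih =>
    intro C p F h hp hmax hm
    have hc : IsCoalition V Set.univ r C p := h.1 (C, p) (by simp)
    by_cases hneg : ∀ v ∈ V, v ≠ r → v ∉ C → inner ℝ (v - r) (p - r) < 0
    · refine (canSucceed_of_opposite hp hneg _ F h rfl).mono ?_
      have h1 := card_activePart_le (r := r) F
      have h2 := congrArg Multiset.card h.2
      rw [card_agents] at h2
      simp only [Multiset.map_cons, Multiset.sum_cons, Finset.card_val] at h2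
      omega
    · push Not at hneg
      obtain ⟨v, hv, hvr, hvC, hvp⟩ := hneg
      obtain ⟨q, hvq, hCq⟩ := exists_approved_insert r v p C (hc.approves hp) hvr hvp
      obtain ⟨c, hcF, hvc⟩ := h.exists_mem_activePart hv hvr hvC
      obtain ⟨hcF, hact⟩ := Multiset.mem_filter.mp hcF
      obtain ⟨F, rfl⟩ := Multiset.exists_cons_of_mem hcF
      obtain ⟨C₂, p₂⟩ := c
      have hle : C₂.card ≤ C.card := hmax (C₂, p₂) (by simp) hact.1
      have hlt : C.card < (approvers r C q ∪ approvers r C₂ q).card := by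
        rw [approvers_eq_self hCq]
        refine Finset.card_lt_card ((Finset.ssubset_iff_of_subset
          Finset.subset_union_left).mpr ⟨v, ?_, hvC⟩)
        exact Finset.mem_union_right _ (Finset.mem_filter.mpr ⟨hvc, hvq⟩)
      have htr := compromiseTransition_of_card_lt h (ne_of_approves hvq) hlt (by omega)
      refine CanSucceed.step htr (ih _ _ _ htr.2.1 (ne_of_approves hvq) ?_ (by omega))
      intro c hc hcr
      simp only [Multiset.mem_cons] at hc
      rcases hc with rfl | rfl | hc
      · exact (Finset.card_le_card Finset.sdiff_subset).trans hlt.le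
      · exact (Finset.card_le_card Finset.sdiff_subset).trans (by omega)
      · exact (hmax c (by simp [hc]) hcr).trans hlt.le

end Runs

/-- In every Euclidean deliberation space (`M = X = ℝ^d`, `d ≥ 1`,
`V ⊆ ℝ^d` finite with `|V| = n`) in which at least one agent approves at least one
proposal, from every deliberative coalition structure `D₀` there is a sequence of at
most `n² + 1` compromise transitions ending in a successful coalition structure. -/
theorem exists_successful_compromise_run_euclidean
    (d : ℕ) (hd : 1 ≤ d)
    (V : Finset (EuclideanSpace ℝ (Fin d))) (r : EuclideanSpace ℝ (Fin d))
    (hex : ∃ v ∈ V, ∃ p : EuclideanSpace ℝ (Fin d), p ≠ r ∧ Approves r v p)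
    (D₀ : Multiset (Finset (EuclideanSpace ℝ (Fin d)) × EuclideanSpace ℝ (Fin d)))
    (h₀ : IsStructure V Set.univ r D₀) :
    ∃ (k : ℕ)
      (Ds : ℕ → Multiset (Finset (EuclideanSpace ℝ (Fin d)) × EuclideanSpace ℝ (Fin d))),
      k ≤ V.card ^ 2 + 1 ∧ Ds 0 = D₀ ∧
      (∀ i < k, CompromiseTransition V Set.univ r (Ds i) (Ds (i + 1))) ∧
      Successful V Set.univ r (Ds k) := by
  obtain ⟨v, hv, x, -, hvx⟩ := hex
  obtain ⟨c₀, hc₀, hvc₀⟩ := h₀.exists_mem hv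
  have hc₀r : c₀.2 ≠ r := (h₀.1 c₀ hc₀).ne_of_mem hvc₀ (agent_ne_of_approves hvx)
  obtain ⟨c, hc, hmax⟩ := Finset.exists_max_image
    (D₀.toFinset.filter fun c => c.2 ≠ r) (fun c => c.1.card)
    ⟨c₀, Finset.mem_filter.mpr ⟨Multiset.mem_toFinset.mpr hc₀, hc₀r⟩⟩
  obtain ⟨hc, hcr⟩ := Finset.mem_filter.mp hc
  obtain ⟨F, rfl⟩ := Multiset.exists_cons_of_mem (Multiset.mem_toFinset.mp hc)
  obtain ⟨k, Ds, hk, h⟩ := canSucceed_of_largest (V.card - c.1.card) c.1 c.2 F h₀ hcr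
    (fun c' hc' hr => hmax c' (Finset.mem_filter.mpr
      ⟨Multiset.mem_toFinset.mpr (Multiset.mem_cons_of_mem hc'), hr⟩)) le_rfl
  refine ⟨k, Ds, ?_, h⟩
  have := Nat.le_self_pow (two_ne_zero) V.card
  omega
end
end
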